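/- Let φ be a Young function. If f, g : ℝ^N → [0, ∞] are Borel measurable and sup f = sup g (possibly ∞), then f⊼g is Lebesgue measurable and max{‖f‖_φ, ‖g‖_φ} ≤ ‖f⊼g‖_φ. -/

import Mathlib

open MeasureTheory Filter Set
open scoped ENNReal NNReal Pointwise

noncomputable section

/-- `ℝ^N` with the Euclidean structure and Lebesgue measure. -/
abbrev ES (N : ℕ) := EuclideanSpace ℝ (Fin N)

variable {N : ℕ}

/-- The operation `(f ⊼ g)(x) = sup_y min (f (x - y)) (g y)` for extended-real valued
functions. -/
def supMinE (f g : ES N → EReal) (x : ES N) : EReal := ⨆ y, min (f (x - y)) (g y)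

/-- The operation `(f ⊻ g)(x) = inf_y max (f (x - y)) (g y)` for extended-real valued
functions. -/
def infMaxE (f g : ES N → EReal) (x : ES N) : EReal := ⨅ y, max (f (x - y)) (g y)

/-- The infimal convolution `(f □ g)(x) = inf_y (f (x - y) + g y)`. -/
def infConvE (f g : ES N → EReal) (x : ES N) : EReal := ⨅ y, (f (x - y) + g y)

/-- The operation `(f ⊼ g)(x) = sup_y min (f (x - y)) (g y)` for `[0,∞]`-valued functions. -/
def supMin (f g : ES N → ℝ≥0∞) (x : ES N) : ℝ≥0∞ := ⨆ y, min (f (x - y)) (g y)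

/-- A Young function: a nonconstant, nondecreasing, convex, left-continuous
`φ : [0,∞] → [0,∞]` with `φ 0 = 0`. -/
structure IsYoungFunction (φ : ℝ≥0∞ → ℝ≥0∞) : Prop where
  nonconstant : ∃ x y, φ x ≠ φ y
  map_zero : φ 0 = 0
  mono : Monotone φ
  convex : ∀ ⦃a b x y : ℝ≥0∞⦄, a + b = 1 → φ (a * x + b * y) ≤ a * φ x + b * φ y
  left_continuous : ∀ x, ContinuousWithinAt φ (Set.Iio x) x

/-- The Luxemburg norm `‖h‖_φ = inf {r > 0 | ∫ φ (r⁻¹ |h|) ≤ 1}` (`= ∞` if no such `r`),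
for a nonnegative function `h`. -/
def luxNorm (φ : ℝ≥0∞ → ℝ≥0∞) (h : ES N → ℝ≥0∞) : ℝ≥0∞ :=
  sInf {r : ℝ≥0∞ | 0 < r ∧ ∫⁻ x, φ (r⁻¹ * h x) ≤ 1}

/-- The nonnegative part of an extended real, as an element of `[0,∞]`. -/
def toENN (a : EReal) : ℝ≥0∞ := if a = ⊤ then ⊤ else ENNReal.ofReal a.toReal

/-- The reciprocal `1/a ∈ [0,∞]` of an extended real (intended for `a ≥ 0`), with the
conventions `1/0 = ∞` and `1/∞ = 0`. -/
def eInv (a : EReal) : ℝ≥0∞ := (toENN a)⁻¹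

/-- The enclosing radius of a set `X ⊆ ℝ^N`: the infimum of the radii of closed balls
containing `X` (`0` for `X = ∅`, `∞` if `X` is unbounded). -/
def encRadius (X : Set (ES N)) : ℝ≥0∞ := sInf {r : ℝ≥0∞ | ∃ c : ES N, ∀ x ∈ X, edist x c ≤ r}

/-- The transform `f̂(x) = γ_f^+(|x|)` where `γ_f^+(t) = inf {ξ | ρ_f^+(ξ) ≤ t}` and
`ρ_f^+(ξ)` is the enclosing radius of the upper level set `{f > ξ}`. -/
def hatE (f : ES N → EReal) (x : ES N) : EReal :=
  sInf {ξ : EReal | encRadius {y | ξ < f y} ≤ (‖x‖₊ : ℝ≥0∞)}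

/-- The lower transform `f̌ = -((-f)^)`. -/
def checkE (f : ES N → EReal) (x : ES N) : EReal := - hatE (fun y => - f y) x

/-- The transform `f̂` for `[0,∞]`-valued functions. -/
def hatT (f : ES N → ℝ≥0∞) (x : ES N) : ℝ≥0∞ :=
  sInf {ξ : ℝ≥0∞ | encRadius {y | ξ < f y} ≤ (‖x‖₊ : ℝ≥0∞)}

/-- The lower transform `f̌(x) = γ_f^-(|x|)`, `γ_f^-(t) = sup {ξ | ρ({f < ξ}) ≤ t}`,
for `[0,∞]`-valued functions. -/
def checkT (f : ES N → ℝ≥0∞) (x : ES N) : ℝ≥0∞ :=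
  sSup {ξ : ℝ≥0∞ | encRadius {y | f y < ξ} ≤ (‖x‖₊ : ℝ≥0∞)}

/-- The `L^p` "norm" (`p ∈ [1,∞]`, essential supremum when `p = ∞`) of a `[0,∞]`-valued
function. -/
def pNorm (p : ℝ≥0∞) (h : ES N → ℝ≥0∞) : ℝ≥0∞ :=
  if p = ∞ then essSup h volume else (∫⁻ x, h x ^ p.toReal) ^ (1 / p.toReal)

/-- In the Baire space, an open set containing the compact box `∏ i, [0, n i]` contains one of the
cylinders `{x | ∀ i < k, x i ≤ n i}`. -/
lemma exists_cylinder_subset_of_pi_Iic_subset {n : ℕ → ℕ} {U : Set (ℕ → ℕ)} (hU : IsOpen U)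
    (hn : Set.pi univ (fun i => Set.Iic (n i)) ⊆ U) :
    ∃ k, {x : ℕ → ℕ | ∀ i < k, x i ≤ n i} ⊆ U := by
  by_contra! h
  simp only [Set.not_subset] at h
  choose x hx hxU using h
  have hK : IsCompact (Set.pi univ (fun i => Set.Iic (n i))) :=
    isCompact_univ_pi fun i => (Set.finite_Iic (n i)).isCompact
  obtain ⟨y, hy, ψ, hψ, hlim⟩ := hK.tendsto_subseq (x := fun k i => min (x k i) (n i))
    (fun k i _ => mem_Iic.2 (min_le_right _ _))
  have hlim' : Tendsto (fun k => x (ψ k)) atTop (nhds y) := by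
    rw [tendsto_pi_nhds] at hlim ⊢
    intro i
    refine (hlim i).congr' ?_
    filter_upwards [eventually_gt_atTop i] with k hk
    exact min_eq_left (hx (ψ k) i (hk.trans_le (hψ.id_le k)))
  obtain ⟨k, hk⟩ := (hlim'.eventually (hU.mem_nhds (hn hy))).exists
  exact hxU _ hk

/-- Inner regularity of analytic sets with respect to compact sets. -/
lemma MeasureTheory.AnalyticSet.exists_isCompact_le_measure {α : Type*} [TopologicalSpace α]
    [MeasurableSpace α] {μ : Measure α} [μ.OuterRegular] {s : Set α} (hs : AnalyticSet s)
    {c : ℝ≥0∞} (hc : c < μ s) : ∃ K ⊆ s, IsCompact K ∧ c ≤ μ K := by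
  rw [AnalyticSet] at hs
  rcases hs with rfl | ⟨f, hf, rfl⟩
  · simp at hc
  have step (k : ℕ) (S : {S : Set (ℕ → ℕ) // c < μ (f '' S)}) :
      ∃ m : ℕ, c < μ (f '' (S.1 ∩ {x | x k ≤ m})) := by
    have hmono : Monotone fun m : ℕ => f '' (S.1 ∩ {x | x k ≤ m}) := fun a b hab =>
      image_mono (inter_subset_inter_right _ fun x (hx : x k ≤ a) => hx.trans hab)
    have hunion : ⋃ m : ℕ, f '' (S.1 ∩ {x | x k ≤ m}) = f '' S.1 := by
      rw [← image_iUnion, ← inter_iUnion, iUnion_eq_univ_iff.2 fun x => ⟨x k, le_refl (x k)⟩,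
        inter_univ]
    have h := S.2
    rwa [← hunion, hmono.measure_iUnion, lt_iSup_iff] at h
  choose m hm using step
  let T : ℕ → {S : Set (ℕ → ℕ) // c < μ (f '' S)} := fun k =>
    Nat.rec ⟨univ, by rwa [image_univ]⟩ (fun k S => ⟨S.1 ∩ {x | x k ≤ m k S}, hm k S⟩) k
  have hT (k : ℕ) : (T k).1 = {x | ∀ i < k, x i ≤ m i (T i)} := by
    induction k with
    | zero => ext x; simp [T]
    | succ k ih =>
      change (T k).1 ∩ {x | x k ≤ m k (T k)} = _
      rw [ih]
      ext x
      exact Nat.forall_lt_succ_right.symm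
  refine ⟨f '' Set.pi univ (fun i => Set.Iic (m i (T i))), image_subset_range _ _,
    (isCompact_univ_pi fun i => (Set.finite_Iic _).isCompact).image hf, ?_⟩
  rw [Set.measure_eq_iInf_isOpen]
  refine le_iInf₂ fun U hU => le_iInf fun hUo => ?_
  obtain ⟨k, hk⟩ := exists_cylinder_subset_of_pi_Iic_subset (hUo.preimage hf)
    (image_subset_iff.1 hU)
  rw [← hT] at hk
  exact (T k).2.le.trans (measure_mono (image_subset_iff.2 hk))

/-- Analytic sets are measurable with respect to the completion of a σ-finite outer regular
Borel measure. -/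
lemma MeasureTheory.AnalyticSet.nullMeasurableSet {α : Type*} [TopologicalSpace α] [PolishSpace α]
    [MeasurableSpace α] [BorelSpace α] {μ : Measure α} [SigmaFinite μ] [μ.OuterRegular]
    {s : Set α} (hs : AnalyticSet s) : NullMeasurableSet s μ := by
  have key {t : Set α} (ht : AnalyticSet t) (hfin : μ t ≠ ∞) : NullMeasurableSet t μ := by
    rcases eq_or_ne (μ t) 0 with h0 | h0
    · exact .of_null h0
    obtain ⟨u, -, hu, hlim⟩ := exists_seq_strictMono_tendsto' (pos_iff_ne_zero.2 h0)
    choose K hKt hK huK using fun n => ht.exists_isCompact_le_measure (hu n).2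
    have hmeas : NullMeasurableSet (⋃ n, K n) μ :=
      (MeasurableSet.iUnion fun n => (hK n).measurableSet).nullMeasurableSet
    exact hmeas.congr <| ae_eq_of_subset_of_measure_ge (iUnion_subset hKt)
      (le_of_tendsto' hlim fun n => (huK n).trans (measure_mono (subset_iUnion K n))) hmeas hfin
  have hunion : s = ⋃ n, s ∩ spanningSets μ n := by
    rw [← inter_iUnion, iUnion_spanningSets, inter_univ]
  rw [hunion]
  refine .iUnion fun n => key ?_ ?_
  · rw [inter_eq_iInter]
    exact .iInter fun b => by
      cases b
      · exact (measurableSet_spanningSets μ n).analyticSet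
      · exact hs
  · exact ((measure_mono inter_subset_right).trans_lt (measure_spanningSets_lt_top μ n)).ne

/-- If every superlevel set of `F` has measure at most that of the corresponding superlevel set
of `G`, then `∫⁻ F ≤ ∫⁻ G`. -/
lemma lintegral_le_lintegral_of_measure_lt_le {α : Type*} [MeasurableSpace α] {μ : Measure α}
    {F G : α → ℝ≥0∞} (hF : AEMeasurable F μ) (hG : AEMeasurable G μ)
    (h : ∀ t, μ {x | t < F x} ≤ μ {x | t < G x}) : ∫⁻ x, F x ∂μ ≤ ∫⁻ x, G x ∂μ := by
  have layer {H : α → ℝ≥0∞} (hH : AEMeasurable H μ) (n : ℕ) :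
      ∫⁻ x, min (H x) n ∂μ =
        ∫⁻ t in Ioi (0 : ℝ), μ {x | ENNReal.ofReal t < min (H x) n} := by
    have hne (x : α) : min (H x) (n : ℝ≥0∞) ≠ ∞ :=
      ((min_le_right _ _).trans_lt (ENNReal.natCast_lt_top n)).ne
    have := lintegral_eq_lintegral_meas_lt μ (f := fun x => (min (H x) n).toReal)
      (.of_forall fun _ => ENNReal.toReal_nonneg) (hH.min aemeasurable_const).ennreal_toReal
    simp only [ENNReal.ofReal_toReal (hne _)] at this
    rw [this]
    refine setLIntegral_congr_fun measurableSet_Ioi fun t (ht : 0 < t) => ?_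
    simp only [ENNReal.ofReal_lt_iff_lt_toReal ht.le (hne _)]
  have hsup (x : α) : F x = ⨆ n : ℕ, min (F x) n := by
    rw [← inf_iSup_eq, ENNReal.iSup_natCast, inf_top_eq]
  calc ∫⁻ x, F x ∂μ = ∫⁻ x, ⨆ n : ℕ, min (F x) n ∂μ := lintegral_congr hsup
    _ = ⨆ n : ℕ, ∫⁻ x, min (F x) n ∂μ :=
      lintegral_iSup' (fun n => hF.min aemeasurable_const)
        (.of_forall fun x a b hab => min_le_min_left _ (Nat.cast_le.2 hab))
    _ ≤ ∫⁻ x, G x ∂μ := iSup_le fun n => ?_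
  refine le_trans ?_ (lintegral_mono fun x => min_le_left (G x) n)
  rw [layer hF, layer hG]
  refine lintegral_mono fun t => ?_
  by_cases ht : ENNReal.ofReal t < n
  · simpa [lt_min_iff, ht] using h (ENNReal.ofReal t)
  · simp [ht]

lemma supMin_comm (f g : ES N → ℝ≥0∞) : supMin f g = supMin g f := by
  funext x
  refine (Equiv.subLeft x).iSup_congr fun y => ?_
  simp [min_comm]

lemma setOf_lt_supMin (f g : ES N → ℝ≥0∞) (a : ℝ≥0∞) :
    {x | a < supMin f g x} = {x | a < f x} + {x | a < g x} := by
  ext x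
  simp only [supMin, mem_ofPred_eq, lt_iSup_iff, lt_min_iff, Set.mem_add]
  constructor
  · rintro ⟨y, hy⟩
    exact ⟨x - y, hy.1, y, hy.2, sub_add_cancel x y⟩
  · rintro ⟨z, hz, y, hy, rfl⟩
    exact ⟨y, by simpa using hz, hy⟩

lemma aemeasurable_supMin {f g : ES N → ℝ≥0∞} (hf : Measurable f) (hg : Measurable g) :
    AEMeasurable (supMin f g) (volume : Measure (ES N)) := by
  refine NullMeasurable.aemeasurable ?_
  refine @measurable_of_Ioi _ (NullMeasurableSpace (ES N) volume) _ _ _ _ _ _ _ _ fun a => ?_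
  change NullMeasurableSet {x | a < supMin f g x} volume
  rw [setOf_lt_supMin, ← add_image_prod]
  exact (((measurableSet_lt measurable_const hf).prod
    (measurableSet_lt measurable_const hg)).analyticSet.image_of_continuous
      continuous_add).nullMeasurableSet

/-- Superlevel sets of a rescaled Young function are open from the left. -/
lemma IsYoungFunction.exists_lt_of_lt_map_mul {φ : ℝ≥0∞ → ℝ≥0∞} (hφ : IsYoungFunction φ)
    {c a t : ℝ≥0∞} (hc : c ≠ ∞) (h : t < φ (c * a)) : ∃ u < a, t < φ (c * u) := by
  have hca : c * a ≠ 0 := fun h0 => by simp [h0, hφ.map_zero] at h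
  have hc0 : c ≠ 0 := left_ne_zero_of_mul hca
  have : (nhdsWithin (c * a) (Set.Iio (c * a))).NeBot :=
    nhdsLT_neBot_of_exists_lt ⟨0, pos_iff_ne_zero.2 hca⟩
  obtain ⟨v, hv, hva⟩ :=
    (((hφ.left_continuous (c * a)).eventually (lt_mem_nhds h)).and self_mem_nhdsWithin).exists
  refine ⟨v / c, ENNReal.div_lt_of_lt_mul' hva, ?_⟩
  rwa [ENNReal.mul_div_cancel hc0 hc]

lemma luxNorm_le_luxNorm_supMin {φ : ℝ≥0∞ → ℝ≥0∞} (hφ : IsYoungFunction φ)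
    {f g : ES N → ℝ≥0∞} (hf : Measurable f) (hg : Measurable g)
    (hsup : (⨆ x, f x) ≤ ⨆ x, g x) : luxNorm φ f ≤ luxNorm φ (supMin f g) := by
  refine sInf_le_sInf fun r ⟨hr, hint⟩ => ⟨hr, le_trans ?_ hint⟩
  have hφm := hφ.mono.measurable
  refine lintegral_le_lintegral_of_measure_lt_le
    (hφm.comp (hf.const_mul _)).aemeasurable
    (hφm.comp_aemeasurable ((aemeasurable_supMin hf hg).const_mul _)) fun t => ?_
  rcases Set.eq_empty_or_nonempty {x | t < φ (r⁻¹ * f x)} with he | ⟨x₀, hx₀⟩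
  · simp [he]
  obtain ⟨u, hu, htu⟩ := hφ.exists_lt_of_lt_map_mul (ENNReal.inv_ne_top.2 hr.ne') hx₀
  obtain ⟨y₀, hy₀⟩ := lt_iSup_iff.1 (hu.trans_le ((le_iSup f x₀).trans hsup))
  rw [← measure_preimage_add_right volume y₀ {x | t < φ (r⁻¹ * supMin f g x)}]
  refine measure_mono fun x (hx : t < φ (r⁻¹ * f x)) => ?_
  have hle : min (f x) (g y₀) ≤ supMin f g (x + y₀) := by
    simpa [supMin] using le_iSup (fun y => min (f (x + y₀ - y)) (g y)) y₀
  refine lt_of_lt_of_le ?_ (hφ.mono (mul_le_mul_right hle _))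
  rcases min_choice (f x) (g y₀) with h | h <;> rw [h]
  · exact hx
  · exact htu.trans_le (hφ.mono (mul_le_mul_right hy₀.le _))

theorem max_luxNorm_le_luxNorm_supMin {N : ℕ} (hN : 0 < N)
    (φ : ℝ≥0∞ → ℝ≥0∞) (hφ : IsYoungFunction φ)
    (f g : ES N → ℝ≥0∞) (hf : Measurable f) (hg : Measurable g)
    (hsup : (⨆ x, f x) = ⨆ x, g x) :
    AEMeasurable (supMin f g) (volume : Measure (ES N)) ∧
      max (luxNorm φ f) (luxNorm φ g) ≤ luxNorm φ (supMin f g) := by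
  refine ⟨aemeasurable_supMin hf hg, max_le (luxNorm_le_luxNorm_supMin hφ hf hg hsup.le) ?_⟩
  rw [supMin_comm]
  exact luxNorm_le_luxNorm_supMin hφ hg hf hsup.ge

end
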